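/- arXiv:1807.07736 — 4 statements merged into one kernel-verified Lean document; each statement's English description precedes it below -/
import Mathlib

section
/- Let N be a positive integer, k an integer, and for i = 1,…,N+1 let α_i, β_i ∈ ℝ and p_i ∈ ℝ, p_i ≠ 0. Define g_n^{(i)}(u,v,w) = α_i p_i^n e^{p_i u + p_i² v + p_i³ w} + β_i (−p_i)^n e^{−p_i u + p_i² v − p_i³ w} (i.e. the reduction q_i = −p_i), and let h_N(k) = det[ g^{(i)}_{k+j−1} ]_{1≤i,j≤N}. Then ∂_v h_N(k) = (∑_{i=1}^N p_i²) h_N(k), hence D_v h_{N+1}(k)·h_N(k) = p_{N+1}² h_{N+1}(k) h_N(k), and the mKP bilinear equations reduce to (D_u² − p_{N+1}²) h_{N+1}(k)·h_N(k) = 0 and (D_u³ − 4 D_w + 3 p_{N+1}² D_u) h_{N+1}(k)·h_N(k) = 0. -/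
open Matrix in
theorem aux_hasDerivAt_det {n : ℕ} (M : ℝ → Matrix (Fin n) (Fin n) ℝ)
    (M' : Matrix (Fin n) (Fin n) ℝ) (x : ℝ)
    (h : ∀ i j, HasDerivAt (fun y => M y i j) (M' i j) x) :
    HasDerivAt (fun y => (M y).det) (∑ j, ((M x).updateCol j (fun i => M' i j)).det) x := by
  simp_rw [det_apply']
  rw [Finset.sum_comm]
  apply HasDerivAt.fun_sum
  intro σ _
  rw [← Finset.mul_sum]
  apply HasDerivAt.const_mul
  have := HasDerivAt.fun_finsetProd (u := Finset.univ) (f := fun i y => M y (σ i) i)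
    (f' := fun i => M' (σ i) i) (x := x) (fun i _ => h _ _)
  convert this using 1
  apply Finset.sum_congr rfl
  intro j _
  rw [← Finset.mul_prod_erase Finset.univ _ (Finset.mem_univ j), smul_eq_mul, mul_comm]
  congr 1
  · apply Finset.prod_congr rfl
    intro i hi
    rw [updateCol_ne (Finset.ne_of_mem_erase hi)]
  · rw [updateCol_self]

open Matrix in
theorem aux_trace {n : ℕ} (A : Matrix (Fin n) (Fin n) ℝ) (P : Fin n → ℝ) :
    ∑ j, (A.updateCol j (fun i => P i * A i j)).det = (∑ i, P i) * A.det := by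
  have h1 : ∀ j, (A.updateCol j (fun i => P i * A i j)).det
      = (A.adjugate * (diagonal P * A)) j j := by
    intro j
    rw [← cramer_apply, cramer_eq_adjugate_mulVec]
    rw [Matrix.mul_apply]
    simp only [mulVec, dotProduct, diagonal_mul]
  simp_rw [h1]
  change trace _ = _
  rw [trace_mul_comm, mul_assoc, mul_adjugate]
  simp [trace, Finset.sum_mul, mul_comm]

/-- matrix columns -/
def auxM (m : ℕ) (b : Fin (m + 3) → ℕ → ℝ) (X Y Z : Fin (m + 3) → ℝ) :
    Matrix (Fin (m + 3)) (Fin (m + 3)) ℝ :=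
  Matrix.of fun i j => if j.val < m then b i j.val else
    if j.val = m then X i else if j.val = m + 1 then Y i else Z i

/-- determinant -/
def auxW (m : ℕ) (b : Fin (m + 3) → ℕ → ℝ) (X Y Z : Fin (m + 3) → ℝ) : ℝ :=
  (auxM m b X Y Z).det

/-- determinant, index version -/
def auxE (m : ℕ) (b : Fin (m + 3) → ℕ → ℝ) (X Y Z : ℕ) : ℝ :=
  auxW m b (fun i => b i X) (fun i => b i Y) (fun i => b i Z)

theorem auxM_upd0 (m : ℕ) (b : Fin (m + 3) → ℕ → ℝ) (X Y Z V : Fin (m + 3) → ℝ) (j : Fin (m+3))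
    (hj : j.val = m) :
    (auxM m b X Y Z).updateCol j V = auxM m b V Y Z := by
  ext i l
  by_cases h : l = j
  · subst h; simp [auxM, hj]
  · have : l.val ≠ m := fun h' => h (Fin.ext (by omega))
    simp [auxM, Matrix.updateCol_ne h, this]

theorem auxM_upd1 (m : ℕ) (b : Fin (m + 3) → ℕ → ℝ) (X Y Z V : Fin (m + 3) → ℝ) (j : Fin (m+3))
    (hj : j.val = m + 1) :
    (auxM m b X Y Z).updateCol j V = auxM m b X V Z := by
  ext i l
  by_cases h : l = j
  · subst h; simp [auxM, hj]
  · have : l.val ≠ m + 1 := fun h' => h (Fin.ext (by omega))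
    simp [auxM, Matrix.updateCol_ne h, this]

theorem auxM_upd2 (m : ℕ) (b : Fin (m + 3) → ℕ → ℝ) (X Y Z V : Fin (m + 3) → ℝ) (j : Fin (m+3))
    (hj : j.val = m + 2) :
    (auxM m b X Y Z).updateCol j V = auxM m b X Y V := by
  ext i l
  by_cases h : l = j
  · subst h; simp [auxM, hj]
  · have h2 : l.val ≠ m + 2 := fun h' => h (Fin.ext (by omega))
    have := l.isLt
    simp only [auxM, Matrix.updateCol_ne h, Matrix.of_apply]
    split_ifs <;> first | rfl | omega

theorem auxW_swap01 (m : ℕ) (b : Fin (m + 3) → ℕ → ℝ) (X Y Z : Fin (m + 3) → ℝ) :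
    auxW m b Y X Z = - auxW m b X Y Z := by
  have hne : (⟨m, by omega⟩ : Fin (m+3)) ≠ ⟨m+1, by omega⟩ := by simp
  have h := Matrix.det_permute' (Equiv.swap (⟨m, by omega⟩ : Fin (m+3)) ⟨m+1, by omega⟩)
    (auxM m b X Y Z)
  rw [Equiv.Perm.sign_swap hne] at h
  unfold auxW
  rw [show - (auxM m b X Y Z).det = _ from by rw [← neg_one_mul]]
  convert h using 1
  · congr 1
    ext i l
    have := l.isLt
    simp only [auxM, Matrix.submatrix_apply, Matrix.of_apply, id, Equiv.swap_apply_def, Fin.ext_iff]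
    split_ifs <;> simp_all
  · simp

theorem auxW_swap12 (m : ℕ) (b : Fin (m + 3) → ℕ → ℝ) (X Y Z : Fin (m + 3) → ℝ) :
    auxW m b X Z Y = - auxW m b X Y Z := by
  have hne : (⟨m+1, by omega⟩ : Fin (m+3)) ≠ ⟨m+2, by omega⟩ := by simp
  have h := Matrix.det_permute' (Equiv.swap (⟨m+1, by omega⟩ : Fin (m+3)) ⟨m+2, by omega⟩)
    (auxM m b X Y Z)
  rw [Equiv.Perm.sign_swap hne] at h
  unfold auxW
  rw [show - (auxM m b X Y Z).det = _ from by rw [← neg_one_mul]]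
  convert h using 1
  · congr 1
    ext i l
    have := l.isLt
    simp only [auxM, Matrix.submatrix_apply, Matrix.of_apply, id, Equiv.swap_apply_def, Fin.ext_iff]
    split_ifs <;> first | rfl | (exfalso; simp_all; done) | (exfalso; simp_all; omega)
  · simp

open Matrix in
theorem aux_plucker {n : ℕ} (M : Matrix (Fin n) (Fin n) ℝ) (p q : Fin n) (hpq : p ≠ q)
    (D : (Fin n → ℝ) → (Fin n → ℝ) → ℝ)
    (hD : ∀ x y, D x y = ((M.updateCol p x).updateCol q y).det)
    (a b x y : Fin n → ℝ) :
    D a b * D x y = D x b * D a y + D a x * D b y := by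
  set A := (M.updateCol p a).updateCol q b with hA
  have h1 := mulVec_cramer A x
  let L : (Fin n → ℝ) →ₗ[ℝ] ℝ := (LinearMap.proj p).comp (cramer (M.updateCol q y))
  have hL : ∀ z, L z = D z y := by
    intro z
    simp only [L, LinearMap.comp_apply, LinearMap.proj_apply, cramer_apply, hD]
    rw [updateCol_comm _ hpq]
  have hLcol : ∀ j, j ≠ p → j ≠ q → L (fun i => A i j) = 0 := by
    intro j hjp hjq
    rw [hL, hD]
    apply det_zero_of_column_eq hjp
    intro i
    simp [hA, hjp, hjq, hpq]
  have h2 : A *ᵥ cramer A x = ∑ j, cramer A x j • (fun i => A i j) := by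
    ext i
    simp [mulVec, dotProduct, mul_comm]
  have h3 := congrArg L h1
  rw [h2, map_sum, map_smul, hL, smul_eq_mul] at h3
  simp only [map_smul, smul_eq_mul] at h3
  rw [← Finset.add_sum_erase Finset.univ _ (Finset.mem_univ p),
    ← Finset.add_sum_erase (Finset.univ.erase p) _
      (Finset.mem_erase.2 ⟨hpq.symm, Finset.mem_univ q⟩),
    Finset.sum_eq_zero] at h3
  · rw [hD a b, ← hA, ← h3, add_zero]
    have e1 : cramer A x p = D x b := by
      rw [cramer_apply, hD, hA, updateCol_comm _ hpq.symm, updateCol_idem, updateCol_comm _ hpq]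
    have e2 : cramer A x q = D a x := by
      rw [cramer_apply, hD, hA, updateCol_idem]
    have e3 : (fun i => A i p) = a := by
      ext i; simp [hA, hpq]
    have e4 : (fun i => A i q) = b := by
      ext i; simp [hA]
    rw [e1, e2, e3, e4, hL, hL]
  · intro j hj
    simp only [Finset.mem_erase] at hj
    rw [hLcol j hj.2.1 hj.1, mul_zero]

theorem auxW_plucker12 (m : ℕ) (c : Fin (m + 3) → ℕ → ℝ) (X a b x y : Fin (m + 3) → ℝ) :
    auxW m c X a b * auxW m c X x y =
      auxW m c X x b * auxW m c X a y + auxW m c X a x * auxW m c X b y := by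
  refine aux_plucker (auxM m c X 0 0) ⟨m+1, by omega⟩ ⟨m+2, by omega⟩ (by simp)
    (fun x y => auxW m c X x y) ?_ a b x y
  intro x y
  rw [auxM_upd1 _ _ _ _ _ _ _ rfl, auxM_upd2 _ _ _ _ _ _ _ rfl, auxW]

theorem auxW_plucker02 (m : ℕ) (c : Fin (m + 3) → ℕ → ℝ) (Y a b x y : Fin (m + 3) → ℝ) :
    auxW m c a Y b * auxW m c x Y y =
      auxW m c x Y b * auxW m c a Y y + auxW m c a Y x * auxW m c b Y y := by
  refine aux_plucker (auxM m c 0 Y 0) ⟨m, by omega⟩ ⟨m+2, by omega⟩ (by simp)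
    (fun x y => auxW m c x Y y) ?_ a b x y
  intro x y
  rw [auxM_upd0 _ _ _ _ _ _ _ rfl, auxM_upd2 _ _ _ _ _ _ _ rfl, auxW]

/-- the shifted sum -/
theorem auxE_sum (m s : ℕ) (hs : 0 < s) (b : Fin (m + 3) → ℕ → ℝ) (X Y Z : ℕ)
    (h : ∀ t, m ≤ t → t < m + s → t = X ∨ t = Y ∨ t = Z)
    (B : Matrix (Fin (m + 3)) (Fin (m + 3)) ℝ)
    (hB : B = auxM m (fun i n => b i (n + s)) (fun i => b i (X + s)) (fun i => b i (Y + s))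
      (fun i => b i (Z + s))) :
    ∑ j, ((auxM m b (fun i => b i X) (fun i => b i Y) (fun i => b i Z)).updateCol j
        (fun i => B i j)).det
      = auxE m b (X + s) Y Z + auxE m b X (Y + s) Z + auxE m b X Y (Z + s) := by
  subst hB
  rw [Fin.sum_univ_castSucc, Fin.sum_univ_castSucc, Fin.sum_univ_castSucc, Finset.sum_eq_zero]
  · rw [auxM_upd0 _ _ _ _ _ _ _ (by simp), auxM_upd1 _ _ _ _ _ _ _ (by simp),
      auxM_upd2 _ _ _ _ _ _ _ (by simp)]
    simp [auxE, auxW, auxM]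
  · intro j _
    have hj := j.isLt
    have key : ∃ l : Fin (m + 3), l ≠ j.castSucc.castSucc.castSucc ∧
        ∀ i, auxM m b (fun i => b i X) (fun i => b i Y) (fun i => b i Z) i l = b i (j + s) := by
      by_cases hjs : j.val + s < m
      · refine ⟨⟨j + s, by omega⟩, ?_, ?_⟩
        · simp only [ne_eq, Fin.ext_iff, Fin.val_castSucc]; omega
        · intro i; simp [auxM, hjs]
      · rcases h (j + s) (by omega) (by omega) with h | h | h
        · refine ⟨⟨m, by omega⟩, ?_, ?_⟩
          · simp only [ne_eq, Fin.ext_iff, Fin.val_castSucc]; omega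
          · intro i; simp [auxM, h]
        · refine ⟨⟨m + 1, by omega⟩, ?_, ?_⟩
          · simp only [ne_eq, Fin.ext_iff, Fin.val_castSucc]; omega
          · intro i; simp [auxM, h]
        · refine ⟨⟨m + 2, by omega⟩, ?_, ?_⟩
          · simp only [ne_eq, Fin.ext_iff, Fin.val_castSucc]; omega
          · intro i; simp [auxM, h]
    obtain ⟨l, hl, hl'⟩ := key
    apply Matrix.det_zero_of_column_eq hl
    intro i
    rw [Matrix.updateCol_ne hl, Matrix.updateCol_self, hl']
    simp [auxM]

theorem auxE_deriv (m s : ℕ) (hs : 0 < s) (b : ℝ → Fin (m + 3) → ℕ → ℝ) (X Y Z : ℕ)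
    (h : ∀ t, m ≤ t → t < m + s → t = X ∨ t = Y ∨ t = Z) (u : ℝ)
    (hb : ∀ i n, HasDerivAt (fun u => b u i n) (b u i (n + s)) u) :
    HasDerivAt (fun u => auxE m (b u) X Y Z)
      (auxE m (b u) (X + s) Y Z + auxE m (b u) X (Y + s) Z + auxE m (b u) X Y (Z + s)) u := by
  rw [← auxE_sum m s hs (b u) X Y Z h _ rfl]
  apply aux_hasDerivAt_det
  intro i j
  simp only [auxM, Matrix.of_apply]
  split_ifs <;> exact hb _ _

theorem auxE_trace (m : ℕ) (b : Fin (m + 3) → ℕ → ℝ) (X Y Z : ℕ)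
    (h : ∀ t, m ≤ t → t < m + 2 → t = X ∨ t = Y ∨ t = Z) (P : Fin (m + 3) → ℝ)
    (hb : ∀ i n, b i (n + 2) = P i * b i n) :
      auxE m b (X + 2) Y Z + auxE m b X (Y + 2) Z + auxE m b X Y (Z + 2) =
      (∑ i, P i) * auxE m b X Y Z := by
  rw [← auxE_sum m 2 (by norm_num) b X Y Z h _ rfl, auxE, auxW, ← aux_trace]
  apply Finset.sum_congr rfl
  intro j _
  congr 2
  ext i
  simp only [auxM, Matrix.of_apply, hb]
  split_ifs <;> rfl

theorem auxE_swap01 (m : ℕ) (b : Fin (m + 3) → ℕ → ℝ) (X Y Z : ℕ) :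
    auxE m b Y X Z = - auxE m b X Y Z := auxW_swap01 _ _ _ _ _

theorem auxE_swap12 (m : ℕ) (b : Fin (m + 3) → ℕ → ℝ) (X Y Z : ℕ) :
    auxE m b X Z Y = - auxE m b X Y Z := auxW_swap12 _ _ _ _ _

theorem auxE_z01 (m : ℕ) (b : Fin (m + 3) → ℕ → ℝ) (X Z : ℕ) : auxE m b X X Z = 0 := by
  have := auxE_swap01 m b X X Z; linarith

theorem auxE_z12 (m : ℕ) (b : Fin (m + 3) → ℕ → ℝ) (X Z : ℕ) : auxE m b X Z Z = 0 := by
  have := auxE_swap12 m b X Z Z; linarith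

/-- summary -/
theorem aux_derivs (m : ℕ) (b : ℝ → ℝ → Fin (m + 3) → ℕ → ℝ) (P : Fin (m + 3) → ℝ)
    (hu : ∀ u w i n, HasDerivAt (fun u => b u w i n) (b u w i (n + 1)) u)
    (hw : ∀ u w i n, HasDerivAt (fun w => b u w i n) (b u w i (n + 3)) w)
    (hb : ∀ u w i n, b u w i (n + 2) = P i * b u w i n)
    (F : ℝ → ℝ → ℝ) (hF : ∀ u w, F u w = auxE m (b u w) m (m+1) (m+2)) (u w : ℝ) :
    F u w = auxE m (b u w) m (m+1) (m+2) ∧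
    deriv (fun u => F u w) u = auxE m (b u w) m (m+1) (m+3) ∧
    deriv (fun u' => deriv (fun u => F u w) u') u =
      auxE m (b u w) m (m+2) (m+3) + auxE m (b u w) m (m+1) (m+4) ∧
    deriv (fun u'' => deriv (fun u' => deriv (fun u => F u w) u') u'') u =
      auxE m (b u w) (m+1) (m+2) (m+3) + 2 * auxE m (b u w) m (m+2) (m+4)
        + auxE m (b u w) m (m+1) (m+5) ∧
    deriv (fun w => F u w) w =
      auxE m (b u w) (m+1) (m+2) (m+3) - auxE m (b u w) m (m+2) (m+4)
        + auxE m (b u w) m (m+1) (m+5) ∧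
    auxE m (b u w) m (m+1) (m+4) - auxE m (b u w) m (m+2) (m+3) =
      (∑ i, P i) * auxE m (b u w) m (m+1) (m+2) ∧
    auxE m (b u w) m (m+1) (m+5) - auxE m (b u w) (m+1) (m+2) (m+3) =
      (∑ i, P i) * auxE m (b u w) m (m+1) (m+3) := by
  have d1 : ∀ u, deriv (fun u => F u w) u = auxE m (b u w) m (m+1) (m+3) := by
    intro u
    simp_rw [hF]
    rw [(auxE_deriv m 1 one_pos (fun u => b u w) m (m+1) (m+2) (by omega) u (hu u w)).deriv]
    simp only [add_assoc, Nat.reduceAdd, auxE_z01, auxE_z12, zero_add]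
  have d2 : ∀ u, deriv (fun u' => deriv (fun u => F u w) u') u =
      auxE m (b u w) m (m+2) (m+3) + auxE m (b u w) m (m+1) (m+4) := by
    intro u
    simp_rw [d1]
    rw [(auxE_deriv m 1 one_pos (fun u => b u w) m (m+1) (m+3) (by omega) u (hu u w)).deriv]
    simp only [add_assoc, Nat.reduceAdd, auxE_z01, auxE_z12, zero_add]
  have s2 : ∀ X Y Z, auxE m (b u w) Z X Y = auxE m (b u w) X Y Z := by
    intro X Y Z
    rw [auxE_swap01 m _ X Z Y, auxE_swap12 m _ X Y Z, neg_neg]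
  refine ⟨hF _ _, d1 u, d2 u, ?_, ?_, ?_, ?_⟩
  · simp_rw [d2]
    rw [((auxE_deriv m 1 one_pos (fun u => b u w) m (m+2) (m+3) (by omega) u (hu u w)).fun_add
     (auxE_deriv m 1 one_pos (fun u => b u w) m (m+1) (m+4) (by omega) u (hu u w))).deriv]
    simp only [add_assoc, Nat.reduceAdd, auxE_z01, auxE_z12, zero_add]
    ring
  · simp_rw [hF]
    rw [(auxE_deriv m 3 (by norm_num) (fun w => b u w) m (m+1) (m+2) (by omega) w (hw u w)).deriv]
    simp only [add_assoc, Nat.reduceAdd]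
    rw [s2 (m+1) (m+2) (m+3), auxE_swap12 m _ m (m+2) (m+4)]
    ring
  · rw [← auxE_trace m (b u w) m (m+1) (m+2) (by omega) P (hb u w)]
    simp only [add_assoc, Nat.reduceAdd]
    rw [s2 (m+1) (m+2) (m+2), auxE_z12, auxE_swap12 m _ m (m+2) (m+3)]
    ring
  · rw [← auxE_trace m (b u w) m (m+1) (m+3) (by omega) P (hb u w)]
    simp only [add_assoc, Nat.reduceAdd]
    rw [auxE_z12, auxE_swap01 m _ (m+1) (m+2) (m+3)]
    ring

/-- adding a row -/
theorem aux_minor (m : ℕ) (b : Fin (m + 4) → ℕ → ℝ) (Y Z : ℕ) :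
    auxE m (fun i => b i.castSucc) m Y Z =
      auxW (m + 1) b (fun i => b i Y) (fun i => b i Z) (Pi.single (Fin.last _) 1) := by
  rw [auxW, Matrix.det_succ_column _ (Fin.last _), Finset.sum_eq_single (Fin.last _)]
  · have e1 : auxM (m + 1) b (fun i => b i Y) (fun i => b i Z) (Pi.single (Fin.last _) 1)
        (Fin.last _) (Fin.last _) = 1 := by
      simp [auxM]
    rw [e1, auxE, auxW, Even.neg_one_pow ⟨_, rfl⟩, one_mul, one_mul]
    congr 1
    ext i j
    have := j.isLt
    simp only [auxM, Matrix.of_apply, Matrix.submatrix_apply, Fin.succAbove_last, Fin.val_castSucc]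
    split_ifs <;> first | rfl | omega | (congr 1; omega)
  · intro i _ hi
    simp [auxM, hi]
  · simp

theorem aux_main (m : ℕ) (b : ℝ → ℝ → Fin (m + 4) → ℕ → ℝ) (P : Fin (m + 4) → ℝ)
    (hu : ∀ u w i n, HasDerivAt (fun u => b u w i n) (b u w i (n + 1)) u)
    (hw : ∀ u w i n, HasDerivAt (fun w => b u w i n) (b u w i (n + 3)) w)
    (hb : ∀ u w i n, b u w i (n + 2) = P i * b u w i n)
    (F G : ℝ → ℝ → ℝ) (hF : ∀ u w, F u w = auxE (m+1) (b u w) (m+1) (m+2) (m+3))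
    (hG : ∀ u w, G u w = auxE m (fun i => b u w i.castSucc) m (m+1) (m+2)) (u w : ℝ) :
    (deriv (fun u' => deriv (fun u'' => F u'' w) u') u * G u w
        - 2 * deriv (fun u' => F u' w) u * deriv (fun u' => G u' w) u
        + F u w * deriv (fun u' => deriv (fun u'' => G u'' w) u') u
        - P (Fin.last _) * (F u w * G u w)
      = 0) ∧
      (deriv (fun u' => deriv (fun u'' => deriv (fun s => F s w) u'') u') u
          * G u w
        - 3 * deriv (fun u' => deriv (fun u'' => F u'' w) u') u
            * deriv (fun u' => G u' w) u
        + 3 * deriv (fun u' => F u' w) u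
            * deriv (fun u' => deriv (fun u'' => G u'' w) u') u
        - F u w
            * deriv (fun u' => deriv (fun u'' => deriv (fun s => G s w) u'') u') u)
      - 4 * (deriv (fun w' => F u w') w * G u w
          - F u w * deriv (fun w' => G u w') w)
      + 3 * P (Fin.last _) *
          (deriv (fun u' => F u' w) u * G u w
            - F u w * deriv (fun u' => G u' w) u)
      = 0 := by
  obtain ⟨f0, f1, f2, f3, fw, ft, ft'⟩ := aux_derivs (m+1) b P hu hw hb F hF u w
  obtain ⟨g0, g1, g2, g3, gw, gt, gt'⟩ := aux_derivs m (fun u w i => b u w i.castSucc)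
    (fun i => P i.castSucc) (fun u w i => hu u w _) (fun u w i => hw u w _)
    (fun u w i => hb u w _) G hG u w
  rw [f0, f1, f2, f3, fw, g0, g1, g2, g3, gw]
  rw [Fin.sum_univ_castSucc] at ft ft'
  have q1 := auxW_plucker12 (m+1) (b u w) (fun i => b u w i (m+1)) (fun i => b u w i (m+2))
    (fun i => b u w i (m+3)) (fun i => b u w i (m+4)) (Pi.single (Fin.last _) 1)
  have q2 := auxW_plucker12 (m+1) (b u w) (fun i => b u w i (m+1)) (fun i => b u w i (m+2))
    (fun i => b u w i (m+3)) (fun i => b u w i (m+5)) (Pi.single (Fin.last _) 1)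
  have q3 := auxW_plucker02 (m+1) (b u w) (fun i => b u w i (m+2)) (fun i => b u w i (m+1))
    (fun i => b u w i (m+3)) (fun i => b u w i (m+4)) (Pi.single (Fin.last _) 1)
  rw [auxW_swap01 (m+1) (b u w) (fun i => b u w i (m+2)) (fun i => b u w i (m+4)),
    auxW_swap01 (m+1) (b u w) (fun i => b u w i (m+2)) (fun i => b u w i (m+4)),
    auxW_swap12 (m+1) (b u w) (fun i => b u w i (m+2)) (fun i => b u w i (m+3)),
    auxW_swap01 (m+1) (b u w) (fun i => b u w i (m+2)) (fun i => b u w i (m+3))] at q3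
  rw [auxW_swap12 (m+1) (b u w) (fun i => b u w i (m+1)) (fun i => b u w i (m+3))
    (fun i => b u w i (m+4))] at q1
  rw [auxW_swap12 (m+1) (b u w) (fun i => b u w i (m+1)) (fun i => b u w i (m+3))
    (fun i => b u w i (m+5))] at q2
  simp only [← aux_minor] at q1 q2 q3
  change auxE (m+1) (b u w) (m+1) (m+2) (m+3) * _ =
    -auxE (m+1) (b u w) (m+1) (m+3) (m+4) * _ + auxE (m+1) (b u w) (m+1) (m+2) (m+4) * _ at q1
  change auxE (m+1) (b u w) (m+1) (m+2) (m+3) * _ =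
    -auxE (m+1) (b u w) (m+1) (m+3) (m+5) * _ + auxE (m+1) (b u w) (m+1) (m+2) (m+5) * _ at q2
  change auxE (m+1) (b u w) (m+1) (m+2) (m+3) * _ =
    - -auxE (m+1) (b u w) (m+2) (m+3) (m+4) * _ + auxE (m+1) (b u w) (m+1) (m+2) (m+4) * _ at q3
  simp only [add_assoc, Nat.reduceAdd] at ft ft' ⊢
  constructor
  · linear_combination (auxE m (fun i => b u w i.castSucc) m (m+1) (m+2)) * ft
      - auxE (m+1) (b u w) (m+1) (m+2) (m+3) * gt + 2 * q1
  · linear_combination 6 * q2 + 6 * q3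
      - 3 * ((auxE m (fun i => b u w i.castSucc) m (m+1) (m+2)) * ft'
      - auxE (m+1) (b u w) (m+1) (m+2) (m+4) * gt
      - (auxE m (fun i => b u w i.castSucc) m (m+1) (m+3)) * ft
      + auxE (m+1) (b u w) (m+1) (m+2) (m+3) * gt')

/-- padding rows -/
def auxPad {n : ℕ} (u : ℝ) (c : Fin n → ℕ → ℝ) : Fin (n + 2) → ℕ → ℝ :=
  Fin.cons (fun j => if j = 0 then 1 else 0)
    (Fin.cons (fun j => if j = 0 then u else if j = 1 then 1 else 0) c)

theorem auxPad_det {n : ℕ} (u : ℝ) (c : Fin n → ℕ → ℝ) :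
    (Matrix.of fun i j : Fin (n + 2) => auxPad u c i j.val).det =
      (Matrix.of fun i j : Fin n => c i (j.val + 2)).det := by
  rw [Matrix.det_succ_row_zero, Fin.sum_univ_succ, Finset.sum_eq_zero, Matrix.det_succ_row_zero,
    Fin.sum_univ_succ, Finset.sum_eq_zero]
  · simp only [auxPad, Matrix.of_apply, Matrix.submatrix_apply]
    simp
    congr 1
  · intro x _
    simp [auxPad]
  · intro x _
    simp [auxPad]

theorem auxE_base (m : ℕ) (b : Fin (m + 3) → ℕ → ℝ) :
    auxE m b m (m+1) (m+2) = (Matrix.of fun i j : Fin (m + 3) => b i j.val).det := by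
  rw [auxE, auxW]
  congr 1
  ext i j
  have := j.isLt
  simp only [auxM, Matrix.of_apply]
  split_ifs <;> first | rfl | (congr 1; omega)

theorem auxPad_castSucc {n : ℕ} (u : ℝ) (c : Fin (n + 1) → ℕ → ℝ) :
    (fun i : Fin (n + 2) => auxPad u c i.castSucc) = auxPad u (fun i => c i.castSucc) := by
  funext i
  refine Fin.cases rfl (fun i => ?_) i
  refine Fin.cases rfl (fun i => ?_) i
  rfl

theorem aux_vderiv {n : ℕ} (p : Fin n → ℝ) (c : Fin n → ℕ → ℝ → ℝ)
    (hc : ∀ i j v, HasDerivAt (c i j) (p i * c i j v) v) (v : ℝ) :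
    deriv (fun v => (Matrix.of fun i j : Fin n => c i j.val v).det) v =
      (∑ i, p i) * (Matrix.of fun i j : Fin n => c i j.val v).det := by
  rw [← aux_trace]
  apply HasDerivAt.deriv
  exact aux_hasDerivAt_det (fun v => Matrix.of fun i j : Fin n => c i j.val v)
    (Matrix.of fun i j : Fin n => p i * c i j.val v) v (fun i j => hc i j v)

/-- For `g_n^{(i)} = α_i p_i^n e^{p_i u + p_i² v + p_i³ w}
+ β_i (-p_i)^n e^{-p_i u + p_i² v - p_i³ w}` (the reduction `q_i = -p_i`) and
`h_N(k) = det[g^{(i)}_{k+j-1}]`, one has `∂_v h_N(k) = (∑_{i=1}^N p_i²) h_N(k)`,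
hence `D_v h_{N+1}(k)·h_N(k) = p_{N+1}² h_{N+1}(k) h_N(k)`, and the mKP bilinear
equations reduce to `(D_u² - p_{N+1}²) h_{N+1}(k)·h_N(k) = 0` and
`(D_u³ - 4D_w + 3p_{N+1}² D_u) h_{N+1}(k)·h_N(k) = 0`. -/
theorem stmt_14 (N : ℕ) (hNpos : 0 < N) (k : ℤ) (α β p : Fin (N + 1) → ℝ)
    (hp : ∀ i, p i ≠ 0)
    (g : Fin (N + 1) → ℤ → ℝ → ℝ → ℝ → ℝ)
    (hg : ∀ i n u v w, g i n u v w =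
      α i * p i ^ n * Real.exp (p i * u + p i ^ 2 * v + p i ^ 3 * w)
        + β i * (-p i) ^ n * Real.exp (-(p i * u) + p i ^ 2 * v - p i ^ 3 * w))
    (hN hN1 : ℤ → ℝ → ℝ → ℝ → ℝ)
    (hhN : ∀ m u v w, hN m u v w =
      Matrix.det (Matrix.of fun i j : Fin N => g (Fin.castSucc i) (m + (j.val : ℤ)) u v w))
    (hhN1 : ∀ m u v w, hN1 m u v w =
      Matrix.det (Matrix.of fun i j : Fin (N + 1) => g i (m + (j.val : ℤ)) u v w)) :
    (∀ u v w, deriv (fun v' => hN k u v' w) v =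
      (∑ i : Fin N, p (Fin.castSucc i) ^ 2) * hN k u v w) ∧
    (∀ u v w,
      deriv (fun v' => hN1 k u v' w) v * hN k u v w
        - hN1 k u v w * deriv (fun v' => hN k u v' w) v
      = p (Fin.last N) ^ 2 * (hN1 k u v w * hN k u v w)) ∧
    (∀ u v w,
      deriv (fun u' => deriv (fun u'' => hN1 k u'' v w) u') u * hN k u v w
        - 2 * deriv (fun u' => hN1 k u' v w) u * deriv (fun u' => hN k u' v w) u
        + hN1 k u v w * deriv (fun u' => deriv (fun u'' => hN k u'' v w) u') u
        - p (Fin.last N) ^ 2 * (hN1 k u v w * hN k u v w)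
      = 0) ∧
    (∀ u v w,
      (deriv (fun u' => deriv (fun u'' => deriv (fun s => hN1 k s v w) u'') u') u
          * hN k u v w
        - 3 * deriv (fun u' => deriv (fun u'' => hN1 k u'' v w) u') u
            * deriv (fun u' => hN k u' v w) u
        + 3 * deriv (fun u' => hN1 k u' v w) u
            * deriv (fun u' => deriv (fun u'' => hN k u'' v w) u') u
        - hN1 k u v w
            * deriv (fun u' => deriv (fun u'' => deriv (fun s => hN k s v w) u'') u') u)
      - 4 * (deriv (fun w' => hN1 k u v w') w * hN k u v w
          - hN1 k u v w * deriv (fun w' => hN k u v w') w)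
      + 3 * p (Fin.last N) ^ 2 *
          (deriv (fun u' => hN1 k u' v w) u * hN k u v w
            - hN1 k u v w * deriv (fun u' => hN k u' v w) u)
      = 0) := by
  have gu : ∀ i n u v w, HasDerivAt (fun u => g i n u v w) (g i (n + 1) u v w) u := by
    intro i n u v w
    simp_rw [hg]
    have e1 : HasDerivAt (fun u : ℝ => p i * u + p i ^ 2 * v + p i ^ 3 * w) (p i) u := by
      simpa using (((hasDerivAt_id u).const_mul (p i)).add_const (p i ^ 2 * v)).add_const
        (p i ^ 3 * w)
    have e2 : HasDerivAt (fun u : ℝ => -(p i * u) + p i ^ 2 * v - p i ^ 3 * w) (-p i) u := by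
      simpa using (((hasDerivAt_id u).const_mul (p i)).neg.add_const (p i ^ 2 * v)).sub_const
        (p i ^ 3 * w)
    refine ((e1.exp.const_mul (α i * p i ^ n)).fun_add
      (e2.exp.const_mul (β i * (-p i) ^ n))).congr_deriv ?_
    rw [zpow_add_one₀ (hp i), zpow_add_one₀ (neg_ne_zero.2 (hp i))]
    ring
  have gw : ∀ i n u v w, HasDerivAt (fun w => g i n u v w) (g i (n + 3) u v w) w := by
    intro i n u v w
    simp_rw [hg]
    have e1 : HasDerivAt (fun w : ℝ => p i * u + p i ^ 2 * v + p i ^ 3 * w) (p i ^ 3) w := by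
      simpa using ((hasDerivAt_id w).const_mul (p i ^ 3)).const_add (p i * u + p i ^ 2 * v)
    have e2 : HasDerivAt (fun w : ℝ => -(p i * u) + p i ^ 2 * v - p i ^ 3 * w) (-p i ^ 3) w := by
      simpa using ((hasDerivAt_id w).const_mul (p i ^ 3)).const_sub (-(p i * u) + p i ^ 2 * v)
    refine ((e1.exp.const_mul (α i * p i ^ n)).fun_add
      (e2.exp.const_mul (β i * (-p i) ^ n))).congr_deriv ?_
    rw [zpow_add₀ (hp i), zpow_add₀ (neg_ne_zero.2 (hp i)),
      show (3 : ℤ) = ((3 : ℕ) : ℤ) from rfl, zpow_natCast, zpow_natCast]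
    ring
  have gv : ∀ i n u v w, HasDerivAt (fun v => g i n u v w) (p i ^ 2 * g i n u v w) v := by
    intro i n u v w
    simp_rw [hg]
    have e1 : HasDerivAt (fun v : ℝ => p i * u + p i ^ 2 * v + p i ^ 3 * w) (p i ^ 2) v := by
      simpa using (((hasDerivAt_id v).const_mul (p i ^ 2)).const_add (p i * u)).add_const
        (p i ^ 3 * w)
    have e2 : HasDerivAt (fun v : ℝ => -(p i * u) + p i ^ 2 * v - p i ^ 3 * w) (p i ^ 2) v := by
      simpa using (((hasDerivAt_id v).const_mul (p i ^ 2)).const_add (-(p i * u))).sub_const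
        (p i ^ 3 * w)
    refine ((e1.exp.const_mul (α i * p i ^ n)).fun_add
      (e2.exp.const_mul (β i * (-p i) ^ n))).congr_deriv ?_
    ring
  have g2 : ∀ i n u v w, g i (n + 2) u v w = p i ^ 2 * g i n u v w := by
    intro i n u v w
    simp_rw [hg]
    rw [zpow_add₀ (hp i), zpow_add₀ (neg_ne_zero.2 (hp i)),
      show (2 : ℤ) = ((2 : ℕ) : ℤ) from rfl, zpow_natCast, zpow_natCast]
    ring
  have V0 : ∀ u v w, deriv (fun v' => hN k u v' w) v =
      (∑ i : Fin N, p (Fin.castSucc i) ^ 2) * hN k u v w := by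
    intro u v w
    simp_rw [hhN]
    exact aux_vderiv (fun i : Fin N => p (Fin.castSucc i) ^ 2)
      (fun i j v => g (Fin.castSucc i) (k + (j : ℤ)) u v w) (fun i j v => gv _ _ _ _ _) v
  have V1 : ∀ u v w, deriv (fun v' => hN1 k u v' w) v =
      (∑ i : Fin (N + 1), p i ^ 2) * hN1 k u v w := by
    intro u v w
    simp_rw [hhN1]
    exact aux_vderiv (fun i : Fin (N + 1) => p i ^ 2)
      (fun i j v => g i (k + (j : ℤ)) u v w) (fun i j v => gv _ _ _ _ _) v
  have key : ∀ v u w, (deriv (fun u' => deriv (fun u'' => hN1 k u'' v w) u') u * hN k u v w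
        - 2 * deriv (fun u' => hN1 k u' v w) u * deriv (fun u' => hN k u' v w) u
        + hN1 k u v w * deriv (fun u' => deriv (fun u'' => hN k u'' v w) u') u
        - p (Fin.last N) ^ 2 * (hN1 k u v w * hN k u v w)
      = 0) ∧
    ((deriv (fun u' => deriv (fun u'' => deriv (fun s => hN1 k s v w) u'') u') u
          * hN k u v w
        - 3 * deriv (fun u' => deriv (fun u'' => hN1 k u'' v w) u') u
            * deriv (fun u' => hN k u' v w) u
        + 3 * deriv (fun u' => hN1 k u' v w) u
            * deriv (fun u' => deriv (fun u'' => hN k u'' v w) u') u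
        - hN1 k u v w
            * deriv (fun u' => deriv (fun u'' => deriv (fun s => hN k s v w) u'') u') u)
      - 4 * (deriv (fun w' => hN1 k u v w') w * hN k u v w
          - hN1 k u v w * deriv (fun w' => hN k u v w') w)
      + 3 * p (Fin.last N) ^ 2 *
          (deriv (fun u' => hN1 k u' v w) u * hN k u v w
            - hN1 k u v w * deriv (fun u' => hN k u' v w) u)
      = 0) := by
    intro v u w
    obtain ⟨m, rfl⟩ : ∃ m, N = m + 1 := ⟨N - 1, by omega⟩
    let b : ℝ → ℝ → Fin (m + 4) → ℕ → ℝ := fun u w =>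
      auxPad u (fun (i : Fin (m + 2)) (n : ℕ) => g i (k - 2 + (n : ℤ)) u v w)
    let P : Fin (m + 4) → ℝ := Fin.cons 0 (Fin.cons 0 (fun i : Fin (m + 2) => p i ^ 2))
    refine aux_main m b P ?_ ?_ ?_ (fun u w => hN1 k u v w) (fun u w => hN k u v w) ?_ ?_ u w
    · intro u w i n
      refine Fin.cases ?_ (fun i => ?_) i
      · simpa [b, auxPad] using hasDerivAt_const u _
      refine Fin.cases ?_ (fun i => ?_) i
      · rcases n with _ | _ | n
        · simpa [b, auxPad] using hasDerivAt_id' u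
        · simpa [b, auxPad] using hasDerivAt_const u _
        · simpa [b, auxPad] using hasDerivAt_const u _
      · have := gu i (k - 2 + (n : ℤ)) u v w
        simpa [b, auxPad, add_assoc] using this
    · intro u w i n
      refine Fin.cases ?_ (fun i => ?_) i
      · simpa [b, auxPad] using hasDerivAt_const w _
      refine Fin.cases ?_ (fun i => ?_) i
      · simpa [b, auxPad] using hasDerivAt_const w _
      · have := gw i (k - 2 + (n : ℤ)) u v w
        simpa [b, auxPad, add_assoc] using this
    · intro u w i n
      refine Fin.cases ?_ (fun i => ?_) i
      · simp [b, auxPad, P]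
      refine Fin.cases ?_ (fun i => ?_) i
      · simp [b, auxPad, P]
      · have := g2 i (k - 2 + (n : ℤ)) u v w
        simpa [b, auxPad, P, add_assoc] using this
    · intro u w
      refine Eq.trans ?_ (auxE_base (m + 1) (b u w)).symm
      refine Eq.trans ?_ (auxPad_det u _).symm
      rw [hhN1]
      congr 1
      ext i j
      simp only [Matrix.of_apply]
      congr 1
      push_cast
      ring
    · intro u w
      refine Eq.trans ?_ (auxE_base m _).symm
      have e : (fun i : Fin (m + 3) => b u w i.castSucc) = _ := auxPad_castSucc u _
      refine Eq.trans ?_ (congrArg (fun c : Fin (m + 3) → ℕ → ℝ =>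
        (Matrix.of fun i j : Fin (m + 3) => c i j.val).det) e).symm
      refine Eq.trans ?_ (auxPad_det u _).symm
      rw [hhN]
      congr 1
      ext i j
      simp only [Matrix.of_apply]
      congr 1
      push_cast
      ring
  refine ⟨V0, ?_, fun u v w => (key v u w).1, fun u v w => (key v u w).2⟩
  intro u v w
  rw [V0, V1, Fin.sum_univ_castSucc]
  ring
end

section
/- Let N be a positive integer, k an integer, and for i = 1,…,N+1 let α_i, β_i, p_i be real parameters with 0 < p_1 < p_2 < ⋯ < p_{N+1}, α_i > 0, and sgn β_i = (−1)^{k+i−1} for all i. Set a = p_{N+1}^{−2} and define f_n^{(i)}(x,t) = α_i p_i^n e^{η_i} + β_i (−p_i)^n e^{−η_i} with η_i = p_i x + 4 p_i³ (1 − (3/2) a p_i²) t. Then ρ_N(k)(x,t) > 0 and ρ_{N+1}(k)(x,t) > 0 for all (x,t) ∈ ℝ²; consequently θ = 2 log( ρ_N(k)/ρ_{N+1}(k) ) is a smooth function on all of ℝ². -/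
lemma det_pos_aux (M : ℕ) (q A B : Fin M → ℝ) (hq : StrictMono q) (hq0 : ∀ i, 0 < q i)
    (hA : ∀ i, 0 < A i) (hB : ∀ i, 0 < B i) :
    0 < Matrix.det (Matrix.of fun i j : Fin M =>
      A i * q i ^ (j : ℕ) + ((-1) ^ (i : ℕ) * B i) * (-q i) ^ (j : ℕ)) := by
  have key : ∀ s : Finset (Fin M), 0 < Matrix.det (Matrix.of fun i j : Fin M =>
      (if i ∈ s then A i else (-1) ^ (i : ℕ) * B i) *
        Matrix.vandermonde (fun i => if i ∈ s then q i else -q i) i j) := by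
    intro s
    rw [Matrix.det_mul_column, Matrix.det_vandermonde]
    rw [Finset.prod_comm' (t' := Finset.univ) (s' := fun j => Finset.Iio j) (by simp),
      ← Finset.prod_mul_distrib]
    apply Finset.prod_pos
    intro j _
    by_cases hj : j ∈ s
    · simp only [hj, if_true]
      refine mul_pos (hA j) (Finset.prod_pos ?_)
      intro i hi
      have h1 := hq (Finset.mem_Iio.1 hi)
      have h2 := hq0 i
      split_ifs <;> linarith
    · simp only [hj, if_false]
      have e : ∏ i ∈ Finset.Iio j, (-q j - if i ∈ s then q i else -q i)
          = (-1) ^ (j : ℕ) * ∏ i ∈ Finset.Iio j, (q j + if i ∈ s then q i else -q i) := by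
        have hc : (j : ℕ) = (Finset.Iio j).card := by simp
        rw [hc, ← Finset.prod_const, ← Finset.prod_mul_distrib]
        exact Finset.prod_congr rfl fun i _ => by ring
      rw [e]
      have h : 0 < ∏ i ∈ Finset.Iio j, (q j + if i ∈ s then q i else -q i) := by
        refine Finset.prod_pos ?_
        intro i hi
        have h1 := hq (Finset.mem_Iio.1 hi)
        have h2 := hq0 i
        split_ifs <;> linarith
      have h4 : ((-1 : ℝ) ^ (j : ℕ)) * (-1) ^ (j : ℕ) = 1 := by
        rw [← mul_pow]; simp
      calc (0 : ℝ) < B j * ∏ i ∈ Finset.Iio j, (q j + if i ∈ s then q i else -q i) :=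
            mul_pos (hB j) h
        _ = (((-1 : ℝ) ^ (j : ℕ)) * (-1) ^ (j : ℕ)) *
            (B j * ∏ i ∈ Finset.Iio j, (q j + if i ∈ s then q i else -q i)) := by
              rw [h4, one_mul]
        _ = _ := by ring
  have := (Matrix.detRowAlternating (R := ℝ) (n := Fin M)).toMultilinearMap.map_add_univ
    (fun i j : Fin M => A i * q i ^ (j : ℕ))
    (fun i j : Fin M => ((-1) ^ (i : ℕ) * B i) * (-q i) ^ (j : ℕ))
  have e : Matrix.det (Matrix.of fun i j : Fin M =>
      A i * q i ^ (j : ℕ) + ((-1) ^ (i : ℕ) * B i) * (-q i) ^ (j : ℕ)) =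
      ∑ s : Finset (Fin M), Matrix.det (Matrix.of fun i j : Fin M =>
      (if i ∈ s then A i else (-1) ^ (i : ℕ) * B i) *
        Matrix.vandermonde (fun i => if i ∈ s then q i else -q i) i j) := by
    refine Eq.trans this (Finset.sum_congr rfl fun s _ => ?_)
    change Matrix.det _ = _
    congr 1
    ext i j
    by_cases hi : i ∈ s <;> simp [hi, Finset.piecewise, Matrix.vandermonde_apply]
  rw [e]
  exact Finset.sum_pos (fun s _ => key s) Finset.univ_nonempty

lemma det_pos_f (M : ℕ) (k : ℤ) (α β p E : Fin M → ℝ) (hp : StrictMono p) (hp0 : ∀ i, 0 < p i)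
    (hα : ∀ i, 0 < α i) (hβ : ∀ i, Real.sign (β i) = (-1 : ℝ) ^ (k + (i.val : ℤ))) :
    0 < Matrix.det (Matrix.of fun i j : Fin M =>
      α i * p i ^ (k + (j.val : ℤ)) * Real.exp (E i)
        + β i * (-p i) ^ (k + (j.val : ℤ)) * Real.exp (-E i)) := by
  have h := det_pos_aux M p (fun i => α i * p i ^ k * Real.exp (E i))
    (fun i => (Real.sign (β i) * β i) * p i ^ k * Real.exp (-E i)) hp hp0
    (fun i => by have := hα i; have := hp0 i; positivity)
    (fun i => by
      have h0 : β i ≠ 0 := by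
        intro h0
        have h1 := hβ i
        rw [h0, Real.sign_zero] at h1
        exact zpow_ne_zero _ (by norm_num) h1.symm
      have := Real.sign_mul_pos_of_ne_zero _ h0
      have := hp0 i; positivity)
  convert h using 5 with i j
  have hpi := (hp0 i).ne'
  have e1 : (-p i) ^ k = (-1) ^ k * p i ^ k := by
    rw [← mul_zpow]; simp
  have h4 : ((-1 : ℝ) ^ (i : ℕ)) * (-1) ^ (i : ℕ) = 1 := by
    rw [← mul_pow]; simp
  rw [hβ i, zpow_add₀ hpi, zpow_add₀ (neg_ne_zero.2 hpi), zpow_add₀ (by norm_num), e1]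
  simp only [zpow_natCast]
  linear_combination (-(β i * (-1) ^ k * p i ^ k * (-p i) ^ (j : ℕ) * Real.exp (-E i))) * h4

lemma det_smooth (M : ℕ) (g : Fin M → Fin M → ℝ × ℝ → ℝ)
    (hg : ∀ i j, ContDiff ℝ (⊤ : ℕ∞) (g i j)) :
    ContDiff ℝ (⊤ : ℕ∞) (fun q => Matrix.det (Matrix.of fun i j => g i j q)) := by
  simp only [Matrix.det_apply', Matrix.of_apply]
  exact ContDiff.sum fun σ _ => contDiff_const.mul (contDiff_prod fun i _ => hg _ _)


/-- Under the parameter conditions `0 < p_1 < ⋯ < p_{N+1}`, `α_i > 0`,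
`sgn β_i = (-1)^{k+i-1}`, with `a = p_{N+1}^{-2}` and
`f_n^{(i)} = α_i p_i^n e^{η_i} + β_i (-p_i)^n e^{-η_i}`,
`η_i = p_i x + 4p_i³(1 - (3/2)a p_i²) t`, the determinants `ρ_N(k)` and `ρ_{N+1}(k)`
are everywhere positive; consequently `θ = 2 log(ρ_N(k)/ρ_{N+1}(k))` is a smooth
function on all of `ℝ²`. -/
theorem stmt_16 (N : ℕ) (hNpos : 0 < N) (k : ℤ) (α β p : Fin (N + 1) → ℝ)
    (hpmono : StrictMono p) (hppos : ∀ i, 0 < p i)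
    (hα : ∀ i, 0 < α i)
    (hβ : ∀ i, Real.sign (β i) = (-1 : ℝ) ^ (k + (i.val : ℤ)))
    (a : ℝ) (ha : a = (p (Fin.last N))⁻¹ ^ 2)
    (f : Fin (N + 1) → ℤ → ℝ → ℝ → ℝ)
    (hf : ∀ i n x t, f i n x t =
      α i * p i ^ n *
        Real.exp (p i * x + 4 * p i ^ 3 * (1 - (3 / 2) * a * p i ^ 2) * t)
        + β i * (-p i) ^ n *
            Real.exp (-(p i * x + 4 * p i ^ 3 * (1 - (3 / 2) * a * p i ^ 2) * t)))
    (ρN ρN1 : ℤ → ℝ → ℝ → ℝ)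
    (hρN : ∀ m x t, ρN m x t =
      Matrix.det (Matrix.of fun i j : Fin N => f (Fin.castSucc i) (m + (j.val : ℤ)) x t))
    (hρN1 : ∀ m x t, ρN1 m x t =
      Matrix.det (Matrix.of fun i j : Fin (N + 1) => f i (m + (j.val : ℤ)) x t))
    (θ : ℝ → ℝ → ℝ)
    (hθ : ∀ x t, θ x t = 2 * Real.log (ρN k x t / ρN1 k x t)) :
    (∀ x t, 0 < ρN k x t ∧ 0 < ρN1 k x t) ∧
    ContDiff ℝ (⊤ : ℕ∞) (fun q : ℝ × ℝ => θ q.1 q.2) := by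
  have hpos : ∀ x t, 0 < ρN k x t ∧ 0 < ρN1 k x t := by
    intro x t
    rw [hρN, hρN1]
    simp only [hf]
    exact ⟨det_pos_f N k (fun i => α i.castSucc) (fun i => β i.castSucc) (fun i => p i.castSucc)
      (fun i => p i.castSucc * x +
        4 * p i.castSucc ^ 3 * (1 - (3 / 2) * a * p i.castSucc ^ 2) * t)
      (fun i j hij => hpmono (by simpa using hij)) (fun i => hppos _) (fun i => hα _)
      (fun i => by simpa using hβ i.castSucc),
      det_pos_f (N + 1) k α β p
        (fun i => p i * x + 4 * p i ^ 3 * (1 - (3 / 2) * a * p i ^ 2) * t) hpmono hppos hα hβ⟩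
  refine ⟨hpos, ?_⟩
  have hs : ∀ i n, ContDiff ℝ (⊤ : ℕ∞) (fun q : ℝ × ℝ => f i n q.1 q.2) := by
    intro i n
    simp only [hf]
    fun_prop
  have h1 : ContDiff ℝ (⊤ : ℕ∞) (fun q : ℝ × ℝ => ρN k q.1 q.2) := by
    simp only [hρN]
    exact det_smooth N (fun i j q => f i.castSucc (k + (j.val : ℤ)) q.1 q.2) fun i j => hs _ _
  have h2 : ContDiff ℝ (⊤ : ℕ∞) (fun q : ℝ × ℝ => ρN1 k q.1 q.2) := by
    simp only [hρN1]
    exact det_smooth (N + 1) (fun i j q => f i (k + (j.val : ℤ)) q.1 q.2) fun i j => hs _ _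
  simp only [hθ]
  exact contDiff_const.mul ((h1.div h2 fun q => (hpos q.1 q.2).2.ne').log
    fun q => (div_pos (hpos q.1 q.2).1 (hpos q.1 q.2).2).ne')
end

section
/- Fix an integer k and a positive integer N. Let F be the N×N real matrix with entries F_{ij} = α_i p_i^{k+j−1} e^{η_i} + β_i q_i^{k+j−1} e^{ξ_i} (1 ≤ i, j ≤ N), where η_i, ξ_i are arbitrary real numbers and the parameters satisfy q_N < q_{N−1} < ⋯ < q_1 < 0 < p_1 < p_2 < ⋯ < p_N, α_i > 0, and sgn β_i = (−1)^{k+i−1} for i = 1,…,N. Then det F > 0. -/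
/-- For the `N×N` matrix `F` with entries
`F_{ij} = α_i p_i^{k+j-1} e^{η_i} + β_i q_i^{k+j-1} e^{ξ_i}`, under the conditions
`q_N < ⋯ < q_1 < 0 < p_1 < ⋯ < p_N`, `α_i > 0`, `sgn β_i = (-1)^{k+i-1}`,
the determinant of `F` is positive. -/
theorem stmt_17 (N : ℕ) (hNpos : 0 < N) (k : ℤ)
    (α β p q η ξ : Fin N → ℝ)
    (hq : StrictAnti q) (hqneg : ∀ i, q i < 0)
    (hppos : ∀ i, 0 < p i) (hpmono : StrictMono p)
    (hα : ∀ i, 0 < α i)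
    (hβ : ∀ i, Real.sign (β i) = (-1 : ℝ) ^ (k + (i.val : ℤ)))
    (F : Matrix (Fin N) (Fin N) ℝ)
    (hF : ∀ i j, F i j =
      α i * p i ^ (k + (j.val : ℤ)) * Real.exp (η i)
        + β i * q i ^ (k + (j.val : ℤ)) * Real.exp (ξ i)) :
    0 < F.det := by
  classical
  set a : Fin N → ℝ := fun i => α i * p i ^ k * Real.exp (η i) with ha
  set b : Fin N → ℝ := fun i => β i * q i ^ k * Real.exp (ξ i) with hb
  have hapos : ∀ i, 0 < a i := fun i =>
    mul_pos (mul_pos (hα i) (zpow_pos (hppos i) k)) (Real.exp_pos _)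
  have hbpos : ∀ i, 0 < b i * (-1 : ℝ) ^ (i.val) := by
    intro i
    have hβ0 : β i ≠ 0 := by
      intro h
      have := hβ i
      rw [h, Real.sign_zero] at this
      exact (zpow_ne_zero _ (by norm_num : (-1 : ℝ) ≠ 0)) this.symm
    have h1 : 0 < β i * Real.sign (β i) := by
      rcases lt_or_gt_of_ne hβ0 with h | h
      · rw [Real.sign_of_neg h]; linarith
      · rw [Real.sign_of_pos h]; linarith
    rw [hβ i, zpow_add₀ (by norm_num : (-1 : ℝ) ≠ 0), zpow_natCast] at h1
    have h2 : q i ^ k = (-1 : ℝ) ^ k * (-q i) ^ k := by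
      rw [← mul_zpow]; simp
    have h3 : 0 < (-q i) ^ k := zpow_pos (by linarith [hqneg i]) k
    have h4 : b i * (-1 : ℝ) ^ (i.val) =
        (β i * ((-1 : ℝ) ^ k * (-1 : ℝ) ^ (i.val))) * (-q i) ^ k * Real.exp (ξ i) := by
      simp only [hb]
      rw [h2]; ring
    rw [h4]
    exact mul_pos (mul_pos h1 h3) (Real.exp_pos _)
  have hFe : F = (fun i j => a i * p i ^ (j.val)) + (fun i j => b i * q i ^ (j.val)) := by
    funext i j
    rw [hF i j, zpow_add₀ (hppos i).ne', zpow_add₀ (hqneg i).ne, zpow_natCast, zpow_natCast]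
    change _ = α i * p i ^ k * Real.exp (η i) * p i ^ (j.val) + β i * q i ^ k * Real.exp (ξ i) * q i ^ (j.val)
    ring
  have hexp := (Matrix.detRowAlternating (R := ℝ) (n := Fin N)).toMultilinearMap.map_add_univ
    (fun i j => a i * p i ^ (j.val)) (fun i j => b i * q i ^ (j.val))
  have hdet : F.det = ∑ s : Finset (Fin N), Matrix.det (Matrix.of
      (s.piecewise (fun i (j : Fin N) => a i * p i ^ (j.val)) (fun i j => b i * q i ^ (j.val)))) := by
    rw [hFe]; exact hexp
  rw [hdet]
  refine Finset.sum_pos (fun s _ => ?_) Finset.univ_nonempty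
  set c : Fin N → ℝ := s.piecewise a b with hc
  set x : Fin N → ℝ := s.piecewise p q with hx
  have hm : Matrix.of (s.piecewise (fun i (j : Fin N) => a i * p i ^ (j.val))
      (fun i j => b i * q i ^ (j.val))) = Matrix.of (fun i j => c i * Matrix.vandermonde x i j) := by
    ext i j
    by_cases h : i ∈ s <;> simp [hc, hx, h, Matrix.vandermonde_apply]
  rw [hm, Matrix.det_mul_column, Matrix.det_vandermonde]
  rw [Finset.prod_comm' (t' := Finset.univ) (s' := fun j => Finset.Iio j) (by simp),
    ← Finset.prod_mul_distrib]
  refine Finset.prod_pos (fun j _ => ?_)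
  by_cases h : j ∈ s
  · have hcj : c j = a j := by simp [hc, h]
    have hxj : x j = p j := by simp [hx, h]
    rw [hcj, hxj]
    refine mul_pos (hapos j) (Finset.prod_pos fun i hi => ?_)
    have hij : i < j := Finset.mem_Iio.1 hi
    by_cases h' : i ∈ s
    · have : x i = p i := by simp [hx, h']
      rw [this]; linarith [hpmono hij]
    · have : x i = q i := by simp [hx, h']
      rw [this]; linarith [hppos j, hqneg i]
  · have hcj : c j = b j := by simp [hc, h]
    have hxj : x j = q j := by simp [hx, h]
    have hp : ∏ i ∈ Finset.Iio j, (x j - x i) =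
        (-1 : ℝ) ^ (j.val) * ∏ i ∈ Finset.Iio j, (x i - x j) := by
      have hcard : (Finset.Iio j).card = j.val := Fin.card_Iio j
      rw [← hcard, ← Finset.prod_const, ← Finset.prod_mul_distrib]
      exact Finset.prod_congr rfl fun i _ => by ring
    rw [hp, ← mul_assoc, hcj, hxj]
    refine mul_pos (hbpos j) (Finset.prod_pos fun i hi => ?_)
    have hij : i < j := Finset.mem_Iio.1 hi
    by_cases h' : i ∈ s
    · have : x i = p i := by simp [hx, h']
      rw [this]; linarith [hppos i, hqneg j]
    · have : x i = q i := by simp [hx, h']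
      rw [this]; linarith [hq hij]
end

section
/- Fix a positive integer N. Let real numbers satisfy q_N < q_{N−1} < ⋯ < q_1 < 0 < p_1 < p_2 < ⋯ < p_N. Let 1 ≤ i_1 < i_2 < ⋯ < i_r ≤ N be a nonempty set of indices, and define for n = 1,…,N: ν_n = q_n if n ∈ {i_1,…,i_r} and ν_n = p_n otherwise. Then the Vandermonde-type product satisfies sgn( ∏_{1 ≤ i < j ≤ N} (ν_j − ν_i) ) = (−1)^{i_1 + i_2 + ⋯ + i_r − r}. -/
theorem aux_sign_prod {ι : Type*} (t : Finset ι) (f g : ι → ℝ)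
    (h : ∀ i ∈ t, 0 < g i * f i) (hg : ∀ i ∈ t, g i = 1 ∨ g i = -1) :
    Real.sign (∏ i ∈ t, f i) = ∏ i ∈ t, g i := by
  have h1 : 0 < (∏ i ∈ t, g i) * ∏ i ∈ t, f i := by
    rw [← Finset.prod_mul_distrib]
    exact Finset.prod_pos h
  have h2 : (∏ i ∈ t, g i) = 1 ∨ (∏ i ∈ t, g i) = -1 := by
    clear h h1
    refine Finset.prod_induction g (fun x => x = 1 ∨ x = -1) ?_ (Or.inl rfl) hg
    rintro a b (rfl | rfl) (rfl | rfl) <;> norm_num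
  rcases h2 with h2 | h2 <;> rw [h2] at h1 ⊢
  · exact Real.sign_of_pos (by linarith)
  · exact Real.sign_of_neg (by linarith)

/-- With `q_N < ⋯ < q_1 < 0 < p_1 < ⋯ < p_N` and a nonempty index set
`{i_1 < ⋯ < i_r}`, setting `ν_n = q_n` for selected indices and `ν_n = p_n`
otherwise, the Vandermonde-type product satisfies
`sgn(∏_{i<j} (ν_j - ν_i)) = (-1)^{i_1+⋯+i_r-r}`. -/
theorem stmt_19 (N : ℕ) (hNpos : 0 < N)
    (p q : Fin N → ℝ)
    (hq : StrictAnti q) (hqneg : ∀ i, q i < 0)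
    (hppos : ∀ i, 0 < p i) (hpmono : StrictMono p)
    (s : Finset (Fin N)) (hs : s.Nonempty)
    (ν : Fin N → ℝ)
    (hin : ∀ n ∈ s, ν n = q n)
    (hout : ∀ n ∉ s, ν n = p n) :
    Real.sign (∏ ij ∈ Finset.univ.filter (fun ij : Fin N × Fin N => ij.1 < ij.2),
        (ν ij.2 - ν ij.1)) =
      (-1 : ℝ) ^ ((∑ n ∈ s, ((n.val : ℤ) + 1)) - (s.card : ℤ)) := by
  classical
  rw [aux_sign_prod _ _ (fun ij : Fin N × Fin N => if ij.2 ∈ s then (-1 : ℝ) else 1)]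
  · have e : (∑ n ∈ s, ((n.val : ℤ) + 1)) - (s.card : ℤ) = ((∑ n ∈ s, n.val : ℕ) : ℤ) := by
      rw [Finset.sum_add_distrib]
      simp
    rw [e, zpow_natCast, ← Finset.prod_pow_eq_pow_sum, Finset.prod_filter,
      ← Finset.univ_product_univ, Finset.prod_product_right]
    rw [← Finset.prod_subset (Finset.subset_univ s)]
    · refine Finset.prod_congr rfl fun j hj => ?_
      simp only [hj, if_true]
      rw [← Finset.prod_filter, Finset.prod_const]
      congr 1
      have : Finset.univ.filter (fun i : Fin N => i < j) = Finset.Iio j := by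
        ext; simp
      rw [this, Fin.card_Iio]
    · intro j _ hj
      simp [hj]
  · rintro ⟨i, j⟩ hij
    have hij : i < j := by simpa using hij
    have a1 := hq hij
    have a2 := hpmono hij
    have a3 := hqneg j
    have a4 := hppos i
    have a5 := hqneg i
    have a6 := hppos j
    by_cases hi : i ∈ s <;> by_cases hj : j ∈ s <;>
      simp only [hj, if_true, if_false] <;>
      first
        | rw [hin i hi, hin j hj]; linarith
        | rw [hin i hi, hout j hj]; linarith
        | rw [hout i hi, hin j hj]; linarith
        | rw [hout i hi, hout j hj]; linarith
  · intro ij _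
    by_cases hj : ij.2 ∈ s <;> simp [hj]
end
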